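/- arXiv:1207.4642 — 3 statements merged into one kernel-verified Lean document; each statement's English description precedes it below -/
import Mathlib

section
/- For every C > 0 and every positive integer j, the set M_{C,j} = { Σ_{l=1}^j a_l·1_{(x_{l−1},x_l)} : 0 = x_0 ≤ x_1 ≤ ... ≤ x_j = 1, |a_l| ≤ C for all l } is a compact subset of L¹[0,1]. -/
open MeasureTheory Filter Set
open scoped ENNReal

noncomputable section

/-- The Lebesgue measure restricted to `[0,1]`. -/
def mu01 : Measure ℝ := volume.restrict (Set.Icc (0:ℝ) 1)

open scoped Topology symmDiff

lemma symmDiff_Ioo_subset {α : Type*} [LinearOrder α] (u v u' v' : α) :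
    Ioo u v ∆ Ioo u' v' ⊆ uIcc u u' ∪ uIcc v v' := by
  intro t ht
  simp only [mem_symmDiff, mem_Ioo, mem_union, mem_uIcc] at *
  grind

lemma mu01_Ioo_ne_top (u v : ℝ) : mu01 (Ioo u v) ≠ ∞ :=
  ((Measure.restrict_apply_le _ _).trans_lt measure_Ioo_lt_top).ne

lemma mu01_symmDiff_Ioo_le (u v u' v' : ℝ) :
    mu01 (Ioo u v ∆ Ioo u' v') ≤ ENNReal.ofReal |u' - u| + ENNReal.ofReal |v' - v| :=
  calc mu01 (Ioo u v ∆ Ioo u' v')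
      ≤ volume (Ioo u v ∆ Ioo u' v') := Measure.restrict_apply_le _ _
    _ ≤ volume (uIcc u u' ∪ uIcc v v') := measure_mono (symmDiff_Ioo_subset u v u' v')
    _ ≤ volume (uIcc u u') + volume (uIcc v v') := measure_union_le _ _
    _ = _ := by rw [Real.volume_interval, Real.volume_interval]

/-- The class of the indicator function of `(u, v)` in `L¹[0,1]`. -/
def indicatorIooLp (u v : ℝ) : Lp ℝ 1 mu01 :=
  indicatorConstLp 1 (measurableSet_Ioo (a := u) (b := v)) (mu01_Ioo_ne_top u v) 1

lemma continuous_indicatorIooLp : Continuous fun p : ℝ × ℝ => indicatorIooLp p.1 p.2 := by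
  refine continuous_indicatorConstLp_set ENNReal.one_ne_top fun p => ?_
  refine tendsto_of_tendsto_of_tendsto_of_le_of_le tendsto_const_nhds ?_ (fun _ => zero_le)
    (fun q => mu01_symmDiff_Ioo_le q.1 q.2 p.1 p.2)
  have h : Continuous fun q : ℝ × ℝ =>
      ENNReal.ofReal |p.1 - q.1| + ENNReal.ofReal |p.2 - q.2| :=
    (ENNReal.continuous_ofReal.comp (by fun_prop)).add
      (ENNReal.continuous_ofReal.comp (by fun_prop))
  simpa using h.tendsto p

/-- The class in `L¹[0,1]` of the step function with nodes `x` and values `a`. -/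
def stepLp {j : ℕ} (p : (Fin (j + 1) → ℝ) × (Fin j → ℝ)) : Lp ℝ 1 mu01 :=
  ∑ l : Fin j, p.2 l • indicatorIooLp (p.1 l.castSucc) (p.1 l.succ)

lemma continuous_stepLp (j : ℕ) : Continuous (stepLp (j := j)) := by
  refine continuous_finsetSum _ fun l _ => Continuous.smul ((continuous_apply l).comp continuous_snd) ?_
  exact continuous_indicatorIooLp.comp
    (f := fun p : (Fin (j + 1) → ℝ) × (Fin j → ℝ) => (p.1 l.castSucc, p.1 l.succ)) (by fun_prop)

lemma stepLp_coeFn {j : ℕ} (p : (Fin (j + 1) → ℝ) × (Fin j → ℝ)) :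
    ∀ᵐ t ∂mu01, stepLp p t = ∑ l : Fin j,
      Set.indicator (Set.Ioo (p.1 l.castSucc) (p.1 l.succ)) (fun _ => p.2 l) t := by
  have hsmul : ∀ᵐ t ∂mu01, ∀ l : Fin j,
      (p.2 l • indicatorIooLp (p.1 l.castSucc) (p.1 l.succ)) t =
        Set.indicator (Set.Ioo (p.1 l.castSucc) (p.1 l.succ)) (fun _ => p.2 l) t := by
    refine ae_all_iff.2 fun l => ?_
    filter_upwards [Lp.coeFn_smul (p.2 l) (indicatorIooLp (p.1 l.castSucc) (p.1 l.succ)),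
      indicatorConstLp_coeFn (p := 1) (hs := measurableSet_Ioo)
        (hμs := mu01_Ioo_ne_top (p.1 l.castSucc) (p.1 l.succ)) (c := (1 : ℝ))] with t h h'
    rw [h, Pi.smul_apply, indicatorIooLp, h']
    by_cases ht : t ∈ Ioo (p.1 l.castSucc) (p.1 l.succ) <;> simp [ht]
  have hsum := Lp.coeFn_finsetSum Finset.univ
    fun l : Fin j => p.2 l • indicatorIooLp (p.1 l.castSucc) (p.1 l.succ)
  filter_upwards [hsmul, hsum] with t h h'
  rw [stepLp, h', Finset.sum_apply]
  exact Finset.sum_congr rfl fun l _ => h l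

/-- The admissible nodes and values of step functions with `j` pieces bounded by `C`. -/
def stepParams (C : ℝ) (j : ℕ) : Set ((Fin (j + 1) → ℝ) × (Fin j → ℝ)) :=
  {p | Monotone p.1 ∧ p.1 0 = 0 ∧ p.1 (Fin.last j) = 1 ∧ ∀ l, |p.2 l| ≤ C}

lemma isCompact_stepParams (C : ℝ) (j : ℕ) : IsCompact (stepParams C j) := by
  refine IsCompact.of_isClosed_subset
    (isCompact_Icc (a := ((fun _ => 0, fun _ => -C) : (Fin (j + 1) → ℝ) × (Fin j → ℝ)))
      (b := (fun _ => 1, fun _ => C))) ?_ ?_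
  · simp only [stepParams, ofPred_and, ofPred_forall]
    exact (isClosed_monotone.preimage continuous_fst).inter <|
      (isClosed_eq (by fun_prop) (by fun_prop)).inter <|
      (isClosed_eq (by fun_prop) (by fun_prop)).inter <|
      isClosed_iInter fun l => isClosed_le (by fun_prop) (by fun_prop)
  · rintro ⟨x, a⟩ ⟨hx, h0, h1, ha⟩
    exact ⟨⟨fun i => h0.symm.le.trans (hx (Fin.zero_le i)), fun l => (abs_le.1 (ha l)).1⟩,
      ⟨fun i => (hx (Fin.le_last i)).trans h1.le, fun l => (abs_le.1 (ha l)).2⟩⟩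

/-- The set `M_{C,j}` of (classes of) step functions with at most `j` pieces, all of whose
values are bounded by `C` in absolute value, is a compact subset of `L¹[0,1]`. -/
theorem statement_6 (C : ℝ) (hC : 0 < C) (j : ℕ) (hj : 1 ≤ j) :
    IsCompact {F : Lp ℝ 1 mu01 |
      ∃ (x : Fin (j + 1) → ℝ) (a : Fin j → ℝ),
        Monotone x ∧ x 0 = 0 ∧ x (Fin.last j) = 1 ∧ (∀ l, |a l| ≤ C) ∧
        ∀ᵐ t ∂mu01,
          F t = ∑ l : Fin j,
            Set.indicator (Set.Ioo (x l.castSucc) (x l.succ)) (fun _ => a l) t} := by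
  convert (isCompact_stepParams C j).image (continuous_stepLp j) using 1
  ext F
  constructor
  · rintro ⟨x, a, hx, h0, h1, ha, hF⟩
    refine ⟨(x, a), ⟨hx, h0, h1, ha⟩, Lp.ext ?_⟩
    filter_upwards [hF, stepLp_coeFn (x, a)] with t h h'
    rw [h, h']
  · rintro ⟨⟨x, a⟩, ⟨hx, h0, h1, ha⟩, rfl⟩
    exact ⟨x, a, hx, h0, h1, ha, stepLp_coeFn (x, a)⟩
end
end

section
/- Let f ∈ L¹[0,1] and ε > 0. Then there exists C > 0 such that for every interval I ⊆ [0,1] and every median μ_I of f on I with |μ_I| ≥ C, one has ∫_I |f| dλ ≤ ε. -/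
open MeasureTheory Filter Set
open scoped ENNReal

noncomputable section

/-- `μ` is a median of `f` on the set `I` with respect to Lebesgue measure. -/
def IsMedianOn (f : ℝ → ℝ) (I : Set ℝ) (μ : ℝ) : Prop :=
  volume {x ∈ I | f x < μ} ≤ volume I / 2 ∧ volume {x ∈ I | μ < f x} ≤ volume I / 2

/-- On at least half of `I`, the function `|f|` is at least the absolute value of a median. -/
theorem IsMedianOn.volume_le_two_mul {f : ℝ → ℝ} {I : Set ℝ} {μ : ℝ} (h : IsMedianOn f I μ)
    (hI : volume I ≠ ∞) : volume I ≤ 2 * volume {x ∈ I | |μ| ≤ |f x|} := by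
  have key : ∀ S : Set ℝ, volume S ≤ volume I / 2 → I ⊆ S ∪ {x ∈ I | |μ| ≤ |f x|} →
      volume I ≤ 2 * volume {x ∈ I | |μ| ≤ |f x|} := by
    intro S hS hsub
    have hle : volume I / 2 + volume I / 2 ≤
        volume I / 2 + volume {x ∈ I | |μ| ≤ |f x|} := by
      rw [ENNReal.add_halves]
      exact (measure_mono hsub).trans ((measure_union_le _ _).trans (by gcongr))
    have hhalf := (ENNReal.add_le_add_iff_left (ENNReal.div_ne_top hI two_ne_zero)).1 hle
    calc volume I = 2 * (volume I / 2) := by rw [two_mul, ENNReal.add_halves]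
      _ ≤ _ := by gcongr
  rcases le_total 0 μ with hμ | hμ
  · refine key _ h.1 fun x hx => ?_
    rcases lt_or_ge (f x) μ with hlt | hge
    · exact Or.inl ⟨hx, hlt⟩
    · exact Or.inr ⟨hx, abs_le_abs_of_nonneg hμ hge⟩
  · refine key _ h.2 fun x hx => ?_
    rcases lt_or_ge μ (f x) with hlt | hge
    · exact Or.inl ⟨hx, hlt⟩
    · exact Or.inr ⟨hx, abs_le_abs_of_nonpos hμ hge⟩

theorem statement_10
    (f : ℝ → ℝ) (hf : IntegrableOn f (Set.Icc 0 1))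
    (ε : ℝ) (hε : 0 < ε) :
    ∃ C : ℝ, 0 < C ∧
      ∀ I : Set ℝ, I ⊆ Set.Icc 0 1 → I.OrdConnected →
        ∀ μ : ℝ, IsMedianOn f I μ → C ≤ |μ| →
          (∫ t in I, |f t|) ≤ ε := by
  set A : ℝ≥0∞ := ∫⁻ x in Icc 0 1, ‖f x‖ₑ
  have hAtop : A ≠ ∞ := hf.2.ne
  obtain ⟨δ, hδ, hsmall⟩ := exists_pos_setLIntegral_lt_of_measure_lt hAtop
    (ENNReal.ofReal_pos.2 hε).ne'
  obtain ⟨n, hn⟩ := ENNReal.exists_nat_gt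
    (ENNReal.div_ne_top (ENNReal.mul_ne_top ENNReal.ofNat_ne_top hAtop) hδ.ne' : 2 * A / δ ≠ ∞)
  have hn0 : 0 < n := by
    rcases Nat.eq_zero_or_pos n with rfl | h
    · simp at hn
    · exact h
  refine ⟨n, by exact_mod_cast hn0, fun I hI _ μ hμ hC => ?_⟩
  have hItop : volume I ≠ ∞ := measure_ne_top_of_subset hI (by simp)
  have hmarkov : n * volume I ≤ 2 * A := by
    calc n * volume I ≤ n * (2 * volume {x ∈ I | |μ| ≤ |f x|}) := by
          gcongr; exact hμ.volume_le_two_mul hItop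
      _ = 2 * (n * volume {x ∈ I | |μ| ≤ |f x|}) := by ring
      _ = 2 * (n * volume.restrict (Icc 0 1) {x ∈ I | |μ| ≤ |f x|}) := by
          rw [Measure.restrict_eq_self _ ((sep_subset _ _).trans hI)]
      _ ≤ 2 * (n * volume.restrict (Icc 0 1) {x | (n : ℝ≥0∞) ≤ ‖f x‖ₑ}) := by
          gcongr 2 * (n * ?_)
          refine measure_mono fun x ⟨_, hx⟩ => ?_
          rw [mem_ofPred_eq, Real.enorm_eq_ofReal_abs, ← ENNReal.ofReal_natCast]
          exact ENNReal.ofReal_le_ofReal (hC.trans hx)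
      _ ≤ 2 * A := by
          gcongr
          exact mul_meas_ge_le_lintegral₀ hf.1.enorm _
  have hIδ : volume I < δ := by
    by_contra! hge
    refine hn.not_ge (ENNReal.le_div_iff_mul_le (Or.inl hδ.ne') (Or.inr ?_) |>.2 ?_)
    · exact ENNReal.mul_ne_top ENNReal.ofNat_ne_top hAtop
    · exact le_trans (by gcongr) hmarkov
  have hlt := hsmall I (by rwa [Measure.restrict_eq_self _ hI])
  rw [Measure.restrict_restrict_of_subset hI] at hlt
  simp_rw [← Real.norm_eq_abs]
  rw [integral_norm_eq_lintegral_enorm (hf.mono_set hI).1]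
  exact ENNReal.toReal_le_of_le_ofReal hε.le hlt.le
end
end

section
/- Let n ≥ 1, f ∈ ℝ^n, γ > 0, and let w_1,...,w_n > 0 be weights. Then the discrete weighted L¹-Potts functional u ↦ γ·#{i ∈ {1,...,n−1} : u_i ≠ u_{i+1}} + Σ_{i=1}^n w_i·|u_i − f_i| attains its minimum over u ∈ ℝ^n, i.e., there exists u* ∈ ℝ^n with γ·J(u*) + ‖u* − f‖_{ℓ¹_w} ≤ γ·J(u) + ‖u − f‖_{ℓ¹_w} for all u ∈ ℝ^n. -/
open scoped Classical

noncomputable section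

/-- Number of jumps of a discrete signal `u ∈ ℝ^{n+1}`. -/
def discJumps {n : ℕ} (u : Fin (n + 1) → ℝ) : ℕ :=
  (Finset.univ.filter fun i : Fin n => u i.castSucc ≠ u i.succ).card

/-- Weighted `ℓ¹` distance. -/
def wdist {n : ℕ} (w u f : Fin (n + 1) → ℝ) : ℝ := ∑ i, w i * |u i - f i|

theorem lowerSemicontinuous_discJumps {n : ℕ} :
    LowerSemicontinuous fun u : Fin (n + 1) → ℝ => (discJumps u : ℝ) := by
  have h : (fun u : Fin (n + 1) → ℝ => (discJumps u : ℝ)) = fun u => ∑ i : Fin n,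
      Set.indicator {u : Fin (n + 1) → ℝ | u i.castSucc ≠ u i.succ} (fun _ => (1 : ℝ)) u := by
    funext u
    simp [discJumps, Set.indicator_apply, Finset.sum_ite]
  rw [h]
  refine lowerSemicontinuous_sum fun i _ => ?_
  exact IsOpen.lowerSemicontinuous_indicator (isOpen_ne_fun (continuous_apply _) (continuous_apply _))
    (zero_le_one (α := ℝ))

theorem continuous_wdist {n : ℕ} (w f : Fin (n + 1) → ℝ) :
    Continuous fun u => wdist w u f := by
  unfold wdist
  fun_prop

/-- Each deviation `|u i - f i|` is controlled by the weighted distance. -/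
theorem abs_sub_le_wdist_div {n : ℕ} {w : Fin (n + 1) → ℝ} (hw : ∀ i, 0 < w i)
    (u f : Fin (n + 1) → ℝ) (i : Fin (n + 1)) : |u i - f i| ≤ wdist w u f / w i := by
  rw [le_div_iff₀ (hw i), mul_comm]
  exact Finset.single_le_sum (f := fun j => w j * |u j - f j|)
    (fun j _ => mul_nonneg (hw j).le (abs_nonneg _)) (Finset.mem_univ i)

/-- The discrete weighted `L¹`-Potts functional attains its minimum over `ℝ^{n+1}`. -/
theorem statement_12 (n : ℕ) (f w : Fin (n + 1) → ℝ) (hw : ∀ i, 0 < w i)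
    (γ : ℝ) (hγ : 0 < γ) :
    ∃ u : Fin (n + 1) → ℝ, ∀ v : Fin (n + 1) → ℝ,
      γ * (discJumps u : ℝ) + wdist w u f ≤ γ * (discJumps v : ℝ) + wdist w v f := by
  set F : (Fin (n + 1) → ℝ) → ℝ := fun u => γ * (discJumps u : ℝ) + wdist w u f with hF
  have hlsc : LowerSemicontinuous F :=
    ((continuous_const_mul γ).comp_lowerSemicontinuous lowerSemicontinuous_discJumps
      (fun _ _ h => mul_le_mul_of_nonneg_left h hγ.le)).add
      (continuous_wdist w f).lowerSemicontinuous
  have hC : 0 ≤ F f := by simp only [hF, wdist, sub_self, abs_zero, mul_zero]; simp; positivity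
  set K : Set (Fin (n + 1) → ℝ) := Set.Icc (fun i => f i - F f / w i) (fun i => f i + F f / w i)
  have hfK : f ∈ K := by
    constructor <;> intro i <;> have := div_nonneg hC (hw i).le <;> dsimp only <;> linarith
  obtain ⟨u, -, hu⟩ := LowerSemicontinuousOn.exists_isMinOn ⟨f, hfK⟩ isCompact_Icc
    (hlsc.lowerSemicontinuousOn K)
  refine ⟨u, fun v => ?_⟩
  by_cases hv : F v ≤ F f
  · refine hu (show v ∈ K from ?_)
    have hd (i : Fin (n + 1)) : |v i - f i| ≤ F f / w i := by
      refine (abs_sub_le_wdist_div hw v f i).trans (div_le_div_of_nonneg_right ?_ (hw i).le)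
      have : 0 ≤ γ * (discJumps v : ℝ) := by positivity
      simp only [hF] at hv ⊢
      linarith
    constructor <;> intro i <;> have := abs_le.1 (hd i) <;> dsimp only <;> linarith
  · exact (hu hfK).trans (not_le.1 hv).le
end
end
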